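/- Let G be a finite simple connected graph of order n with minimum degree δ. Then GA(G) ≤ AG(G) ≤ ((δ+n−1)²/(4δ(n−1)))·GA(G); the left equality holds if and only if G is regular, and the right equality holds if and only if G is isomorphic to the star K_{1,n−1} or to the complete graph K_n. -/

import Mathlib

open SimpleGraph

/-- The degree of a vertex, as a natural number (classical, to avoid decidability assumptions). -/
noncomputable def ndeg {V : Type*} [Fintype V] (G : SimpleGraph V) (v : V) : ℕ :=
  letI := Classical.decRel G.Adj
  G.degree v

/-- The degree of a vertex, as a real number. -/
noncomputable def deg {V : Type*} [Fintype V] (G : SimpleGraph V) (v : V) : ℝ :=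
  (ndeg G v : ℝ)

/-- For a symmetric function `f`, `edgeSum G f = Σ_{uv ∈ E(G)} f (d_u) (d_v)`:
each unordered edge is counted twice in the double sum, hence the factor `1/2`. -/
noncomputable def edgeSum {V : Type*} [Fintype V] (G : SimpleGraph V) (f : ℝ → ℝ → ℝ) : ℝ :=
  letI := Classical.decRel G.Adj
  (1 / 2) * ∑ u : V, ∑ w : V, if G.Adj u w then f (deg G u) (deg G w) else 0

/-- The arithmetic-geometric index `AG(G) = Σ_{uv ∈ E(G)} (1/2)(√(d_u/d_v) + √(d_v/d_u))`. -/
noncomputable def AG {V : Type*} [Fintype V] (G : SimpleGraph V) : ℝ :=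
  edgeSum G (fun x y => (Real.sqrt (x / y) + Real.sqrt (y / x)) / 2)

/-- The first geometric-arithmetic index `GA(G) = Σ_{uv ∈ E(G)} 2√(d_u d_v)/(d_u + d_v)`. -/
noncomputable def GA {V : Type*} [Fintype V] (G : SimpleGraph V) : ℝ :=
  edgeSum G (fun x y => 2 * Real.sqrt (x * y) / (x + y))

/-- The forgotten index `F(G) = Σ_{uv ∈ E(G)} (d_u² + d_v²)`. -/
noncomputable def forgottenIndex {V : Type*} [Fintype V] (G : SimpleGraph V) : ℝ :=
  edgeSum G (fun x y => x ^ 2 + y ^ 2)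

/-- The first Zagreb index `M₁(G) = Σ_{uv ∈ E(G)} (d_u + d_v)`. -/
noncomputable def M1 {V : Type*} [Fintype V] (G : SimpleGraph V) : ℝ :=
  edgeSum G (fun x y => x + y)

/-- The second Zagreb index `M₂(G) = Σ_{uv ∈ E(G)} d_u d_v`. -/
noncomputable def M2 {V : Type*} [Fintype V] (G : SimpleGraph V) : ℝ :=
  edgeSum G (fun x y => x * y)

/-- The symmetric division deg index `SDD(G) = Σ_{uv ∈ E(G)} (d_u/d_v + d_v/d_u)`. -/
noncomputable def SDD {V : Type*} [Fintype V] (G : SimpleGraph V) : ℝ :=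
  edgeSum G (fun x y => x / y + y / x)

/-- The atom-bond connectivity index `ABC(G) = Σ_{uv ∈ E(G)} √((d_u + d_v − 2)/(d_u d_v))`. -/
noncomputable def ABC {V : Type*} [Fintype V] (G : SimpleGraph V) : ℝ :=
  edgeSum G (fun x y => Real.sqrt ((x + y - 2) / (x * y)))

/-- `G` is `(s,r)`-semiregular: its vertex set is the disjoint union of two nonempty sets,
all vertices of the first having degree `s` and all vertices of the second degree `r`. -/
def IsSemiregular {V : Type*} [Fintype V] (G : SimpleGraph V) (s r : ℕ) : Prop :=
  ∃ V₁ V₂ : Set V, V₁.Nonempty ∧ V₂.Nonempty ∧ Disjoint V₁ V₂ ∧ V₁ ∪ V₂ = Set.univ ∧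
    (∀ v ∈ V₁, ndeg G v = s) ∧ (∀ v ∈ V₂, ndeg G v = r)

/-!
On an edge with end degrees `x, y`, the summand of `AG` is the ratio `r` of the arithmetic to the
geometric mean of `x` and `y`, and that of `GA` is `r⁻¹`. As `1 ≤ r`, with equality iff `x = y`, the
lower bound holds, with equality iff the degree is constant along edges. For `0 < a`, the ratio `r`
is largest on `[a, b]²` exactly at `(a, b)` and `(b, a)`; with `a = δ` and `b = n - 1`, the
inequality `r ≤ r(a, b)² r⁻¹` gives the upper bound, with equality iff every edge joins a vertex of
minimum degree to a universal vertex. If moreover some vertex is not universal, then no edge joins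
two universal vertices, so there is only one, and it lies on every edge: `G` is a star.
-/

section AmGmRatio

/-- The ratio `((x + y) / 2) / √(x y)` of the arithmetic to the geometric mean of two positive
reals, in the form in which it is the summand of `AG`; its inverse is the summand of `GA`. -/
noncomputable def amGmRatio (x y : ℝ) : ℝ :=
  (√(x / y) + √(y / x)) / 2

variable {a b x y : ℝ}

theorem amGmRatio_eq_div (hx : 0 < x) (hy : 0 < y) :
    amGmRatio x y = (x + y) / (2 * √(x * y)) := by
  rw [amGmRatio, Real.sqrt_div hx.le, Real.sqrt_div hy.le, Real.sqrt_mul hx.le]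
  field_simp
  rw [Real.sq_sqrt hx.le, Real.sq_sqrt hy.le]

theorem amGmRatio_pos (hx : 0 < x) (hy : 0 < y) : 0 < amGmRatio x y := by
  rw [amGmRatio]
  positivity

theorem amGmRatio_sq (hx : 0 < x) (hy : 0 < y) :
    amGmRatio x y ^ 2 = (x + y) ^ 2 / (4 * x * y) := by
  rw [amGmRatio_eq_div hx hy, div_pow, mul_pow, Real.sq_sqrt (by positivity)]
  ring

theorem amGmRatio_sq_sub_one (hx : 0 < x) (hy : 0 < y) :
    amGmRatio x y ^ 2 - 1 = (x - y) ^ 2 / (4 * x * y) := by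
  rw [amGmRatio_sq hx hy]
  field_simp
  ring

theorem one_le_amGmRatio (hx : 0 < x) (hy : 0 < y) : 1 ≤ amGmRatio x y := by
  rw [← one_le_sq_iff₀ (amGmRatio_pos hx hy).le, ← sub_nonneg, amGmRatio_sq_sub_one hx hy]
  positivity

theorem amGmRatio_eq_one_iff (hx : 0 < x) (hy : 0 < y) : amGmRatio x y = 1 ↔ x = y := by
  have hxy : 4 * x * y ≠ 0 := by positivity
  rw [← pow_eq_one_iff_of_nonneg (amGmRatio_pos hx hy).le two_ne_zero, ← sub_eq_zero,
    amGmRatio_sq_sub_one hx hy, div_eq_zero_iff, or_iff_left hxy, sq_eq_zero_iff, sub_eq_zero]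

theorem amGmRatio_sq_sub_sq (ha : 0 < a) (hb : 0 < b) (hx : 0 < x) (hy : 0 < y) :
    amGmRatio a b ^ 2 - amGmRatio x y ^ 2 =
      (a * y - x * b) * (a * x - y * b) / (4 * (a * b) * (x * y)) := by
  rw [amGmRatio_sq ha hb, amGmRatio_sq hx hy]
  field_simp
  ring

theorem amGmRatio_le_of_mem_Icc (ha : 0 < a) (hx : x ∈ Set.Icc a b) (hy : y ∈ Set.Icc a b) :
    amGmRatio x y ≤ amGmRatio a b := by
  have hx₀ : 0 < x := ha.trans_le hx.1
  have hy₀ : 0 < y := ha.trans_le hy.1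
  have hb : 0 < b := hx₀.trans_le hx.2
  have hay : a * y ≤ x * b := mul_le_mul hx.1 hy.2 hy₀.le hx₀.le
  have hax : a * x ≤ y * b := mul_le_mul hy.1 hx.2 hx₀.le hy₀.le
  rw [← sq_le_sq₀ (amGmRatio_pos hx₀ hy₀).le (amGmRatio_pos ha hb).le, ← sub_nonneg,
    amGmRatio_sq_sub_sq ha hb hx₀ hy₀]
  exact div_nonneg (mul_nonneg_of_nonpos_of_nonpos (sub_nonpos.2 hay) (sub_nonpos.2 hax))
    (by positivity)

theorem amGmRatio_eq_iff_of_mem_Icc (ha : 0 < a) (hx : x ∈ Set.Icc a b) (hy : y ∈ Set.Icc a b) :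
    amGmRatio x y = amGmRatio a b ↔ x = a ∧ y = b ∨ x = b ∧ y = a := by
  have hx₀ : 0 < x := ha.trans_le hx.1
  have hy₀ : 0 < y := ha.trans_le hy.1
  have hb : 0 < b := hx₀.trans_le hx.2
  have hne : 4 * (a * b) * (x * y) ≠ 0 := by positivity
  rw [← pow_left_inj₀ (amGmRatio_pos hx₀ hy₀).le (amGmRatio_pos ha hb).le two_ne_zero, eq_comm,
    ← sub_eq_zero, amGmRatio_sq_sub_sq ha hb hx₀ hy₀, div_eq_zero_iff, or_iff_left hne,
    mul_eq_zero, sub_eq_zero, sub_eq_zero, mul_eq_mul_iff_eq_and_eq_of_pos hx.1 hy.2 ha hb,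
    mul_eq_mul_iff_eq_and_eq_of_pos hy.1 hx.2 ha hb, eq_comm (a := a), eq_comm (a := a),
    and_comm (a := y = a)]

theorem inv_amGmRatio_le_self (hx : 0 < x) (hy : 0 < y) : (amGmRatio x y)⁻¹ ≤ amGmRatio x y :=
  have h := one_le_amGmRatio hx hy
  (inv_le_one_of_one_le₀ h).trans h

theorem inv_amGmRatio_eq_self_iff (hx : 0 < x) (hy : 0 < y) :
    (amGmRatio x y)⁻¹ = amGmRatio x y ↔ x = y := by
  have hr := amGmRatio_pos hx hy
  rw [← one_div, div_eq_iff hr.ne', eq_comm, ← sq,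
    pow_eq_one_iff_of_nonneg hr.le two_ne_zero, amGmRatio_eq_one_iff hx hy]

theorem amGmRatio_le_sq_mul_inv (ha : 0 < a) (hx : x ∈ Set.Icc a b) (hy : y ∈ Set.Icc a b) :
    amGmRatio x y ≤ amGmRatio a b ^ 2 * (amGmRatio x y)⁻¹ := by
  have hr := amGmRatio_pos (ha.trans_le hx.1) (ha.trans_le hy.1)
  rw [le_mul_inv_iff₀ hr, ← sq]
  exact pow_le_pow_left₀ hr.le (amGmRatio_le_of_mem_Icc ha hx hy) 2

theorem amGmRatio_eq_sq_mul_inv_iff (ha : 0 < a) (hx : x ∈ Set.Icc a b) (hy : y ∈ Set.Icc a b) :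
    amGmRatio x y = amGmRatio a b ^ 2 * (amGmRatio x y)⁻¹ ↔ x = a ∧ y = b ∨ x = b ∧ y = a := by
  have hr := amGmRatio_pos (ha.trans_le hx.1) (ha.trans_le hy.1)
  have hr' := amGmRatio_pos ha (ha.trans_le (hx.1.trans hx.2))
  rw [eq_mul_inv_iff_mul_eq₀ hr.ne', ← sq, pow_left_inj₀ hr.le hr'.le two_ne_zero,
    amGmRatio_eq_iff_of_mem_Icc ha hx hy]

end AmGmRatio

section EdgeSum

variable {V : Type*} [Fintype V] {G : SimpleGraph V} {f g : ℝ → ℝ → ℝ}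

theorem edgeSum_eq_sum_filter [DecidableRel G.Adj] :
    edgeSum G f = 1 / 2 * ∑ p : V × V with G.Adj p.1 p.2, f (deg G p.1) (deg G p.2) := by
  rw [edgeSum, Finset.sum_filter, Fintype.sum_prod_type]
  congr!

theorem mul_edgeSum (c : ℝ) : c * edgeSum G f = edgeSum G (fun x y => c * f x y) := by
  classical
  simp only [edgeSum_eq_sum_filter, mul_left_comm c, Finset.mul_sum]

theorem edgeSum_congr (h : ∀ u w, G.Adj u w → f (deg G u) (deg G w) = g (deg G u) (deg G w)) :
    edgeSum G f = edgeSum G g := by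
  classical
  rw [edgeSum_eq_sum_filter, edgeSum_eq_sum_filter,
    Finset.sum_congr rfl fun p hp => h p.1 p.2 (Finset.mem_filter_univ p |>.1 hp)]

theorem edgeSum_le_edgeSum
    (h : ∀ u w, G.Adj u w → f (deg G u) (deg G w) ≤ g (deg G u) (deg G w)) :
    edgeSum G f ≤ edgeSum G g := by
  classical
  rw [edgeSum_eq_sum_filter, edgeSum_eq_sum_filter]
  gcongr with p hp
  exact h p.1 p.2 (Finset.mem_filter_univ p |>.1 hp)

theorem edgeSum_eq_edgeSum_iff_of_le
    (h : ∀ u w, G.Adj u w → f (deg G u) (deg G w) ≤ g (deg G u) (deg G w)) :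
    edgeSum G f = edgeSum G g ↔
      ∀ u w, G.Adj u w → f (deg G u) (deg G w) = g (deg G u) (deg G w) := by
  classical
  rw [edgeSum_eq_sum_filter, edgeSum_eq_sum_filter, mul_right_inj' one_half_pos.ne',
    Finset.sum_eq_sum_iff_of_le fun p hp => h p.1 p.2 (Finset.mem_filter_univ p |>.1 hp)]
  simp only [Finset.mem_filter_univ, Prod.forall]

end EdgeSum

section Indices

variable {V : Type*} [Fintype V] {G : SimpleGraph V} {a b : ℝ} {u w : V}

theorem ndeg_eq_degree (G : SimpleGraph V) (v : V) [Fintype (G.neighborSet v)] :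
    ndeg G v = G.degree v := by
  unfold ndeg
  congr!

theorem deg_pos_of_adj (huw : G.Adj u w) : 0 < deg G u := by
  classical
  rw [deg, ndeg_eq_degree, Nat.cast_pos, degree_pos_iff_exists_adj]
  exact ⟨w, huw⟩

theorem AG_eq_edgeSum_amGmRatio (G : SimpleGraph V) : AG G = edgeSum G amGmRatio :=
  rfl

theorem GA_eq_edgeSum_inv_amGmRatio (G : SimpleGraph V) :
    GA G = edgeSum G fun x y => (amGmRatio x y)⁻¹ :=
  edgeSum_congr fun u w huw => by
    rw [amGmRatio_eq_div (deg_pos_of_adj huw) (deg_pos_of_adj huw.symm), inv_div]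

theorem GA_le_AG (G : SimpleGraph V) : GA G ≤ AG G := by
  rw [GA_eq_edgeSum_inv_amGmRatio, AG_eq_edgeSum_amGmRatio]
  exact edgeSum_le_edgeSum fun u w huw =>
    inv_amGmRatio_le_self (deg_pos_of_adj huw) (deg_pos_of_adj huw.symm)

theorem GA_eq_AG_iff : GA G = AG G ↔ ∀ u w, G.Adj u w → ndeg G u = ndeg G w := by
  rw [GA_eq_edgeSum_inv_amGmRatio, AG_eq_edgeSum_amGmRatio, edgeSum_eq_edgeSum_iff_of_le
    fun u w huw => inv_amGmRatio_le_self (deg_pos_of_adj huw) (deg_pos_of_adj huw.symm)]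
  refine forall₂_congr fun u w => forall_congr' fun huw => ?_
  rw [inv_amGmRatio_eq_self_iff (deg_pos_of_adj huw) (deg_pos_of_adj huw.symm), deg, deg,
    Nat.cast_inj]

theorem AG_le_amGmRatio_sq_mul_GA (ha : 0 < a) (hG : ∀ v ∈ G.support, deg G v ∈ Set.Icc a b) :
    AG G ≤ amGmRatio a b ^ 2 * GA G := by
  rw [GA_eq_edgeSum_inv_amGmRatio, AG_eq_edgeSum_amGmRatio, mul_edgeSum]
  exact edgeSum_le_edgeSum fun u w huw =>
    amGmRatio_le_sq_mul_inv ha (hG u huw.mem_support_left) (hG w huw.mem_support_right)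

theorem AG_eq_amGmRatio_sq_mul_GA_iff (ha : 0 < a)
    (hG : ∀ v ∈ G.support, deg G v ∈ Set.Icc a b) :
    AG G = amGmRatio a b ^ 2 * GA G ↔
      ∀ u w, G.Adj u w → deg G u = a ∧ deg G w = b ∨ deg G u = b ∧ deg G w = a := by
  rw [GA_eq_edgeSum_inv_amGmRatio, AG_eq_edgeSum_amGmRatio, mul_edgeSum,
    edgeSum_eq_edgeSum_iff_of_le fun u w huw =>
      amGmRatio_le_sq_mul_inv ha (hG u huw.mem_support_left) (hG w huw.mem_support_right)]
  exact forall₂_congr fun u w => forall_congr' fun huw =>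
    amGmRatio_eq_sq_mul_inv_iff ha (hG u huw.mem_support_left) (hG w huw.mem_support_right)

theorem isLeast_range_ndeg [Nonempty V] (G : SimpleGraph V) [DecidableRel G.Adj] :
    IsLeast (Set.range (ndeg G)) G.minDegree := by
  obtain ⟨v, hv⟩ := G.exists_minimal_degree_vertex
  refine ⟨⟨v, (ndeg_eq_degree G v).trans hv.symm⟩, Set.forall_mem_range.2 fun w => ?_⟩
  exact (G.minDegree_le_degree w).trans_eq (ndeg_eq_degree G w).symm

theorem deg_mem_Icc [DecidableRel G.Adj] (v : V) :
    deg G v ∈ Set.Icc (G.minDegree : ℝ) (Fintype.card V - 1 : ℕ) := by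
  rw [deg, ndeg_eq_degree, Set.mem_Icc, Nat.cast_le, Nat.cast_le]
  exact ⟨G.minDegree_le_degree v, Nat.le_sub_one_of_lt (G.degree_lt_card_verts v)⟩

end Indices

section Graphs

variable {V W : Type*} {G : SimpleGraph V}

theorem eq_of_forall_adj_eq_of_preconnected {α : Type*} {f : V → α} (hG : G.Preconnected)
    (h : ∀ u v, G.Adj u v → f u = f v) (u v : V) : f u = f v := by
  obtain ⟨p⟩ := hG u v
  induction p with
  | nil => rfl
  | cons huv _ ih => exact (h _ _ huv).trans ih

theorem forall_adj_eq_iff_of_connected {α : Type*} {f : V → α} (hG : G.Connected) :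
    (∀ u v, G.Adj u v → f u = f v) ↔ ∃ r, ∀ v, f v = r := by
  constructor
  · intro h
    obtain ⟨z⟩ := hG.nonempty
    exact ⟨f z, fun v => eq_of_forall_adj_eq_of_preconnected hG.preconnected h v z⟩
  · rintro ⟨r, hr⟩ u v -
    rw [hr, hr]

theorem nonempty_iso_top_iff (e : V ≃ W) : Nonempty (G ≃g (⊤ : SimpleGraph W)) ↔ G = ⊤ := by
  constructor
  · rintro ⟨φ⟩
    ext u v
    rw [← φ.map_adj_iff, top_adj, top_adj, φ.injective.ne_iff]
  · rintro rfl
    exact ⟨Iso.completeGraph e⟩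

theorem nonempty_iso_starGraph_iff (e : V ≃ W) (d : W) :
    Nonempty (G ≃g starGraph d) ↔ ∃ c, G = starGraph c := by
  classical
  constructor
  · rintro ⟨φ⟩
    refine ⟨φ.symm d, ?_⟩
    ext u v
    rw [← φ.map_adj_iff, starGraph_adj, starGraph_adj, φ.injective.ne_iff]
    simp only [← φ.injective.eq_iff, RelIso.apply_symm_apply]
  · rintro ⟨c, rfl⟩
    let φ : V ≃ W := e.trans (Equiv.swap (e c) d)
    have hφ : φ c = d := Equiv.swap_apply_left _ _
    refine ⟨φ, fun {u v} => ?_⟩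
    rw [starGraph_adj, starGraph_adj, ← hφ, φ.injective.ne_iff, φ.injective.eq_iff,
      φ.injective.eq_iff]

theorem completeBipartiteGraph_eq_starGraph (α β : Type*) [Unique α] :
    completeBipartiteGraph α β = starGraph (Sum.inl default) := by
  ext (i | i) (j | j) <;> simp [eq_iff_true_of_subsingleton]

theorem eq_starGraph_iff {c : V} :
    G = starGraph c ↔ G.IsUniversal c ∧ ∀ u v, G.Adj u v → u = c ∨ v = c := by
  constructor
  · rintro rfl
    exact ⟨isUniversal_starGraph_self, fun u v huv => (starGraph_adj.1 huv).2⟩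
  · rintro ⟨hc, h⟩
    ext u v
    rw [starGraph_adj]
    refine ⟨fun huv => ⟨huv.ne, h u v huv⟩, ?_⟩
    rintro ⟨hne, rfl | rfl⟩
    exacts [hc hne, (hc hne.symm).symm]

variable [Fintype V] [DecidableRel G.Adj]

theorem exists_eq_starGraph_or_eq_top_of_forall_adj (hδ : 0 < G.minDegree)
    (h : ∀ u v, G.Adj u v → G.degree u = G.minDegree ∧ G.degree v = Fintype.card V - 1 ∨
      G.degree u = Fintype.card V - 1 ∧ G.degree v = G.minDegree) :
    (∃ c, G = starGraph c) ∨ G = ⊤ := by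
  rw [or_iff_not_imp_right, eq_top_iff_forall_isUniversal, not_forall]
  rintro ⟨z, hz⟩
  have hzlt : G.degree z < Fintype.card V - 1 := (G.degree_lt_card_sub_one z).2 hz
  have hlt : G.minDegree < Fintype.card V - 1 := (G.minDegree_le_degree z).trans_lt hzlt
  obtain ⟨c, hzc⟩ := (G.degree_pos_iff_exists_adj z).1 (hδ.trans_le (G.minDegree_le_degree z))
  have hcdeg : G.degree c = Fintype.card V - 1 :=
    (h z c hzc).elim (fun hends => hends.2) (fun hends => absurd hends.1 hzlt.ne)
  have hc : G.IsUniversal c := (G.degree_eq_card_sub_one c).1 hcdeg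
  have huniq : ∀ u, G.degree u = Fintype.card V - 1 → u = c := by
    intro u hu
    by_contra hne
    rcases h u c (hc (Ne.symm hne)).symm with ⟨hu', -⟩ | ⟨-, hc'⟩
    · exact hlt.ne (hu'.symm.trans hu)
    · exact hlt.ne (hc'.symm.trans hcdeg)
  refine ⟨c, eq_starGraph_iff.2 ⟨hc, fun u v huv => ?_⟩⟩
  exact (h u v huv).symm.imp (fun hu => huniq u hu.1) (fun hv => huniq v hv.2)

theorem forall_adj_degree_iff_eq_starGraph_or_eq_top (hδ : 0 < G.minDegree) :
    (∀ u v, G.Adj u v → G.degree u = G.minDegree ∧ G.degree v = Fintype.card V - 1 ∨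
      G.degree u = Fintype.card V - 1 ∧ G.degree v = G.minDegree) ↔
      (∃ c, G = starGraph c) ∨ G = ⊤ := by
  refine ⟨exists_eq_starGraph_or_eq_top_of_forall_adj hδ, ?_⟩
  rintro (⟨c, rfl⟩ | rfl) u v huv
  · classical
    have : Nontrivial V := huv.nontrivial
    have hc : (starGraph c).degree c = Fintype.card V - 1 := by simp
    have hleaf : ∀ w, w ≠ c → (starGraph c).degree w = (starGraph c).minDegree := fun w hw => by
      rw [(isTree_starGraph c).minDegree_eq_one_of_nontrivial]
      convert degree_starGraph_of_ne_center hw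
    rcases starGraph_adj.1 huv with ⟨hne, rfl | rfl⟩
    · exact .inr ⟨hc, hleaf v hne.symm⟩
    · exact .inl ⟨hleaf u hne, hc⟩
  · classical
    have hdeg : ∀ w, (⊤ : SimpleGraph V).degree w = Fintype.card V - 1 := fun w => by simp
    have : Nonempty V := ⟨u⟩
    exact .inl ⟨(hdeg u).trans (IsRegularOfDegree.minDegree_eq _ hdeg).symm, hdeg v⟩

end Graphs

/-- Theorem 7 of the paper: comparison of `GA` and `AG`. -/
theorem stmt10 {V : Type*} [Fintype V] (G : SimpleGraph V) (hG : G.Connected)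
    (n δ : ℕ) (hn : Fintype.card V = n) (hn2 : 2 ≤ n)
    (hδ : IsLeast (Set.range (ndeg G)) δ) :
    (GA G ≤ AG G ∧
      AG G ≤ (((δ : ℝ) + n - 1) ^ 2 / (4 * (δ : ℝ) * ((n : ℝ) - 1))) * GA G) ∧
    (GA G = AG G ↔ ∃ r, ∀ v : V, ndeg G v = r) ∧
    (AG G = (((δ : ℝ) + n - 1) ^ 2 / (4 * (δ : ℝ) * ((n : ℝ) - 1))) * GA G ↔
      Nonempty (G ≃g completeBipartiteGraph (Fin 1) (Fin (n - 1))) ∨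
      Nonempty (G ≃g (⊤ : SimpleGraph (Fin n)))) := by
  classical
  subst hn
  have : Nonempty V := hG.nonempty
  obtain rfl : δ = G.minDegree := hδ.unique (isLeast_range_ndeg G)
  have : Nontrivial V := Fintype.one_lt_card_iff_nontrivial.1 hn2
  have hδ₀ : 0 < G.minDegree := hG.preconnected.minDegree_pos_of_nontrivial
  have hδ' : (0 : ℝ) < G.minDegree := Nat.cast_pos.2 hδ₀
  have hn' : (0 : ℝ) < (Fintype.card V - 1 : ℕ) := Nat.cast_pos.2 (Nat.sub_pos_of_lt hn2)
  have hdeg : ∀ v ∈ G.support, deg G v ∈ Set.Icc (G.minDegree : ℝ) (Fintype.card V - 1 : ℕ) :=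
    fun v _ => deg_mem_Icc v
  have hcard : Fintype.card V = Fintype.card (Fin 1 ⊕ Fin (Fintype.card V - 1)) := by
    simp only [Fintype.card_sum, Fintype.card_fin]
    lia
  rw [add_sub_assoc, ← Nat.cast_pred Fintype.card_pos, ← amGmRatio_sq hδ' hn']
  refine ⟨⟨GA_le_AG G, AG_le_amGmRatio_sq_mul_GA hδ' hdeg⟩, ?_, ?_⟩
  · rw [GA_eq_AG_iff, forall_adj_eq_iff_of_connected hG]
  · rw [AG_eq_amGmRatio_sq_mul_GA_iff hδ' hdeg, completeBipartiteGraph_eq_starGraph,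
      nonempty_iso_starGraph_iff (Fintype.equivOfCardEq hcard),
      nonempty_iso_top_iff (Fintype.equivFin V), ← forall_adj_degree_iff_eq_starGraph_or_eq_top hδ₀]
    simp only [deg, ndeg_eq_degree, Nat.cast_inj]
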